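/- Let n = m + r with m ≥ 0, r ≥ 1, and let g ∈ GL(n,ℝ) be a matrix whose last row is e_n = (0,…,0,1). Then g can be written as g = s · diag(k, 1), where k ∈ O(n−1) is an orthogonal (n−1)×(n−1) matrix (embedded in GL(n,ℝ) as the block-diagonal matrix diag(k,1)) and s ∈ GL(n,ℝ) has block form [[a, X],[0, p]] with a ∈ GL(m,ℝ), X an m×r real matrix, and p ∈ GL(r,ℝ) a matrix whose last row is e_r = (0,…,0,1). (This is the decomposition P_n = [(G_m × P_r) ⋉ M_{m×r}(ℝ)] · K_{n−1} deduced from the Iwasawa decomposition of GL(n−1,ℝ).) -/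

import Mathlib

/-!
Write `g = [[h, u], [0, 1]]` and factor `h = b k` with `b` upper triangular and `k` unitary. Then
`g = [[b, u], [0, 1]] · diag(k, 1)`, and the left factor `s` is upper triangular with last row
`e_n`. Being triangular, `s` has zero lower left block for every splitting `n = m + r`; its
diagonal blocks inherit invertibility, and the lower one inherits the last row.
-/

open Matrix

section IsUpperTriangular

variable {𝕜 ι : Type*} [RCLike 𝕜] [LinearOrder ι] [Fintype ι]

lemma exists_isUpperTriangular_mul_unitary (M : Matrix ι ι 𝕜) :
    ∃ U : Matrix ι ι 𝕜, U.IsUpperTriangular ∧ ∃ Q ∈ unitaryGroup ι 𝕜, M = U * Q := by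
  let : LocallyFiniteOrderTop ι := .ofIci ι (fun a => {x | a ≤ x}) (by simp)
  let conjRows : ι → EuclideanSpace 𝕜 ι := fun i => WithLp.toLp 2 (Mᴴ.col i)
  -- Gram–Schmidt runs through the rows from the last to the first.
  let b : OrthonormalBasis ι 𝕜 (EuclideanSpace 𝕜 ι) :=
    (InnerProductSpace.gramSchmidtOrthonormalBasis (by simp) (conjRows ∘ OrderDual.ofDual)).reindex
      OrderDual.ofDual
  let e := EuclideanSpace.basisFun ι 𝕜
  have hfactor : Mᴴ = e.toBasis.toMatrix b * b.toBasis.toMatrix conjRows := by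
    rw [← b.coe_toBasis, Module.Basis.toMatrix_mul_toMatrix]
    ext i j
    simp [e, conjRows, Module.Basis.toMatrix_apply]
  have hlower (i j : ι) (hij : i < j) : b.toBasis.toMatrix conjRows i j = 0 := by
    simpa [b, Module.Basis.toMatrix_apply] using
      InnerProductSpace.gramSchmidtOrthonormalBasis_inv_triangular' (by simp)
        (conjRows ∘ OrderDual.ofDual) (OrderDual.toDual_lt_toDual.2 hij)
  refine ⟨(b.toBasis.toMatrix conjRows)ᴴ, fun i j hij => ?_, star (e.toBasis.toMatrix b),
    Unitary.star_mem (e.toMatrix_orthonormalBasis_mem_unitary b), ?_⟩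
  · rw [conjTranspose_apply, hlower j i hij, star_zero]
  · rw [star_eq_conjTranspose, ← conjTranspose_mul, ← hfactor, conjTranspose_conjTranspose]

end IsUpperTriangular

section FinBlocks

variable {R : Type*} {m n : ℕ}

/-- The square matrix `[[A, B], [C, D]]` of size `m + n`, with rows and columns indexed by
`Fin (m + n)` rather than by `Fin m ⊕ Fin n` as in `Matrix.fromBlocks`. -/
def finBlocks (A : Matrix (Fin m) (Fin m) R) (B : Matrix (Fin m) (Fin n) R)
    (C : Matrix (Fin n) (Fin m) R) (D : Matrix (Fin n) (Fin n) R) :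
    Matrix (Fin (m + n)) (Fin (m + n)) R :=
  reindex finSumFinEquiv finSumFinEquiv (fromBlocks A B C D)

lemma exists_eq_finBlocks (M : Matrix (Fin (m + n)) (Fin (m + n)) R) :
    ∃ A B C D, M = finBlocks (m := m) (n := n) A B C D := by
  let N := (reindex finSumFinEquiv finSumFinEquiv).symm M
  refine ⟨N.toBlocks₁₁, N.toBlocks₁₂, N.toBlocks₂₁, N.toBlocks₂₂, ?_⟩
  rw [finBlocks, fromBlocks_toBlocks, Equiv.apply_symm_apply]

lemma finBlocks_mul [NonUnitalNonAssocSemiring R]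
    (A A' : Matrix (Fin m) (Fin m) R) (B B' : Matrix (Fin m) (Fin n) R)
    (C C' : Matrix (Fin n) (Fin m) R) (D D' : Matrix (Fin n) (Fin n) R) :
    finBlocks A B C D * finBlocks A' B' C' D' =
      finBlocks (A * A' + B * C') (A * B' + B * D') (C * A' + D * C') (C * B' + D * D') := by
  simp only [finBlocks, reindex_apply, submatrix_mul_equiv, fromBlocks_multiply]

lemma isUnit_finBlocks_zero_iff [CommRing R] {A : Matrix (Fin m) (Fin m) R}
    {B : Matrix (Fin m) (Fin n) R} {D : Matrix (Fin n) (Fin n) R} :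
    IsUnit (finBlocks A B 0 D) ↔ IsUnit A ∧ IsUnit D := by
  rw [finBlocks, reindex_apply, isUnit_submatrix_equiv, isUnit_fromBlocks_zero₂₁]

lemma isUpperTriangular_finBlocks_iff [Zero R] {A : Matrix (Fin m) (Fin m) R}
    {B : Matrix (Fin m) (Fin n) R} {C : Matrix (Fin n) (Fin m) R} {D : Matrix (Fin n) (Fin n) R} :
    (finBlocks A B C D).IsUpperTriangular ↔ A.IsUpperTriangular ∧ C = 0 ∧ D.IsUpperTriangular := by
  have hlt (i : Fin m) (j : Fin n) : Fin.castAdd n i < Fin.natAdd m j := Nat.lt_add_right j i.2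
  simp [IsUpperTriangular, BlockTriangular, Fin.forall_fin_add, finBlocks, hlt, (hlt _ _).not_gt,
    (Fin.strictMono_castAdd n).lt_iff_lt, ← Matrix.ext_iff, forall_and, and_assoc]

end FinBlocks

section Mirabolic

variable {R : Type*} {m n : ℕ}

/-- The condition that the last row of a square matrix is `(0, …, 0, 1)`, which cuts the mirabolic
subgroup out of the general linear group. Invertibility is not part of the condition. -/
def IsMirabolic [Zero R] [One R] (M : Matrix (Fin (n + 1)) (Fin (n + 1)) R) : Prop :=
  M (Fin.last n) = Pi.single (Fin.last n) 1

lemma isMirabolic_iff_forall [Zero R] [One R] {M : Matrix (Fin (n + 1)) (Fin (n + 1)) R} :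
    IsMirabolic M ↔ ∀ j : Fin (n + 1), M (Fin.last n) j = if (j : ℕ) = n then 1 else 0 := by
  simp only [IsMirabolic, funext_iff, Pi.single_apply, Fin.ext_iff, Fin.val_last]

lemma isMirabolic_finBlocks_iff [Zero R] [One R] {A : Matrix (Fin m) (Fin m) R}
    {B : Matrix (Fin m) (Fin (n + 1)) R} {C : Matrix (Fin (n + 1)) (Fin m) R}
    {D : Matrix (Fin (n + 1)) (Fin (n + 1)) R} :
    IsMirabolic (n := m + n) (finBlocks (m := m) (n := n + 1) A B C D) ↔
      C (Fin.last n) = 0 ∧ IsMirabolic D := by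
  have hne (i : Fin m) : (i : ℕ) ≠ m + n := (Nat.lt_add_right n i.2).ne
  calc
    _ ↔ ∀ j : Fin (m + (n + 1)), finBlocks A B C D (Fin.natAdd m (Fin.last n)) j =
        if (j : ℕ) = m + n then 1 else 0 := isMirabolic_iff_forall
    _ ↔ C (Fin.last n) = 0 ∧ IsMirabolic D := by
        simp [isMirabolic_iff_forall, Fin.forall_fin_add, finBlocks, hne, funext_iff,
          -Fin.natAdd_last]

end Mirabolic

lemma IsMirabolic.exists_isUpperTriangular_mul_finBlocks {𝕜 : Type*} [RCLike 𝕜] {n : ℕ}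
    {M : Matrix (Fin (n + 1)) (Fin (n + 1)) 𝕜} (hM : IsMirabolic M) :
    ∃ S : Matrix (Fin (n + 1)) (Fin (n + 1)) 𝕜, S.IsUpperTriangular ∧ IsMirabolic S ∧
      ∃ k ∈ unitaryGroup (Fin n) 𝕜, M = S * finBlocks k 0 0 1 := by
  obtain ⟨h, u, c, d, rfl⟩ := exists_eq_finBlocks (m := n) (n := 1) M
  obtain ⟨hc, hd⟩ := isMirabolic_finBlocks_iff.1 hM
  obtain ⟨b, hb, k, hk, rfl⟩ := exists_isUpperTriangular_mul_unitary h
  obtain rfl : c = 0 := by ext i j; rw [Subsingleton.elim i (Fin.last 0), hc]; rfl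
  have hd' : d.IsUpperTriangular := fun i j hij => absurd hij (by simp [Subsingleton.elim i j])
  refine ⟨finBlocks b u 0 d, isUpperTriangular_finBlocks_iff.2 ⟨hb, rfl, hd'⟩,
    isMirabolic_finBlocks_iff.2 ⟨rfl, hd⟩, k, hk, ?_⟩
  simp [finBlocks_mul]

theorem klyachko_stmt_12_general {𝕜 : Type*} [RCLike 𝕜] {m q : ℕ} (g : GL (Fin (m + (q + 1))) 𝕜)
    (hg : IsMirabolic (n := m + q) (g : Matrix _ _ 𝕜)) :
    ∃ k ∈ unitaryGroup (Fin (m + q)) 𝕜, ∃ (a : Matrix (Fin m) (Fin m) 𝕜)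
      (X : Matrix (Fin m) (Fin (q + 1)) 𝕜) (p : Matrix (Fin (q + 1)) (Fin (q + 1)) 𝕜),
      IsUnit a ∧ IsUnit p ∧ IsMirabolic p ∧
      (g : Matrix _ _ 𝕜) =
        finBlocks a X 0 p * finBlocks k 0 0 (1 : Matrix (Fin 1) (Fin 1) 𝕜) := by
  obtain ⟨s, hs, hslast, k, hk, hgs⟩ := hg.exists_isUpperTriangular_mul_finBlocks
  have hsunit : IsUnit s := isUnit_of_mul_isUnit_left (hgs ▸ g.isUnit)
  obtain ⟨a, X, c, p, rfl⟩ := exists_eq_finBlocks (m := m) (n := q + 1) s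
  obtain ⟨-, rfl, -⟩ := isUpperTriangular_finBlocks_iff.1 hs
  obtain ⟨ha, hp⟩ := isUnit_finBlocks_zero_iff.1 hsunit
  exact ⟨k, hk, a, X, p, ha, hp, (isMirabolic_finBlocks_iff.1 hslast).2, hgs⟩

/-- Let `n = m + r` with `r ≥ 1`, and let `g ∈ GL(n, ℝ)` have last row
`e_n = (0, …, 0, 1)` (i.e. `g ∈ P_n`). Then `g = s * diag(k, 1)` where `k ∈ O(n-1)` is
orthogonal (embedded as `diag(k, 1)`) and `s` has block form `[[a, X], [0, p]]` with
`a ∈ GL(m, ℝ)`, `X ∈ M_{m×r}(ℝ)`, and `p ∈ GL(r, ℝ)` with last row `e_r`. This is the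
decomposition `P_n = [(G_m × P_r) ⋉ M_{m×r}(ℝ)] · K_{n-1}`. -/
theorem klyachko_stmt_12 (m r : ℕ) (hr : 1 ≤ r) (g : GL (Fin (m + r)) ℝ)
    (hg : ∀ j : Fin (m + r),
      (↑g : Matrix (Fin (m + r)) (Fin (m + r)) ℝ) ⟨m + r - 1, by omega⟩ j
        = if (j : ℕ) = m + r - 1 then 1 else 0) :
    ∃ (kmat : Matrix (Fin (m + r - 1)) (Fin (m + r - 1)) ℝ)
      (a : Matrix (Fin m) (Fin m) ℝ) (X : Matrix (Fin m) (Fin r) ℝ)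
      (p : Matrix (Fin r) (Fin r) ℝ),
      kmatᵀ * kmat = 1 ∧
      IsUnit a ∧ IsUnit p ∧
      (∀ j : Fin r, p ⟨r - 1, by omega⟩ j = if (j : ℕ) = r - 1 then 1 else 0) ∧
      (↑g : Matrix (Fin (m + r)) (Fin (m + r)) ℝ)
        = Matrix.reindex finSumFinEquiv finSumFinEquiv (Matrix.fromBlocks a X 0 p)
          * Matrix.reindex
              (finSumFinEquiv.trans (finCongr (by omega : m + r - 1 + 1 = m + r)))
              (finSumFinEquiv.trans (finCongr (by omega : m + r - 1 + 1 = m + r)))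
              (Matrix.fromBlocks kmat 0 0 (1 : Matrix (Fin 1) (Fin 1) ℝ)) := by
  obtain ⟨q, rfl⟩ := Nat.exists_eq_add_of_le' hr
  obtain ⟨k, hk, a, X, p, ha, hp, hplast, hgs⟩ :=
    klyachko_stmt_12_general g (isMirabolic_iff_forall.2 hg)
  exact ⟨k, a, X, p, mem_unitaryGroup_iff'.1 hk, ha, hp, isMirabolic_iff_forall.1 hplast, hgs⟩
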